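/- arXiv:2103.00090 — 3 statements merged into one kernel-verified Lean document; each statement's English description precedes it below -/
import Mathlib

section
/- For any type V with a binary relation ∈ on V, if x is an upper and y is a successor of x, then x and y are coextensive. -/
theorem coextensive_succ_iff_mem_self {V : Type*} {mem : V → V → Prop} {x y : V}
    (hy : ∀ z, mem z y ↔ (mem z x ∨ z = x)) :
    (∀ z, mem z y ↔ mem z x) ↔ mem x x where
  mp hyx := (hyx x).mp ((hy x).mpr (Or.inr rfl))
  mpr hxx z := (hy z).trans (or_iff_left_of_imp fun hzx => hzx ▸ hxx)

theorem upper_coextensive_succ {V : Type*} (mem : V → V → Prop) (x y : V)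
    (hx : ∀ z, ¬ mem z z → mem z x)
    (hy : ∀ z, mem z y ↔ (mem z x ∨ z = x)) :
    ∀ z, mem z y ↔ mem z x := by
  have mem_self : mem x x := by_contra fun hxx => hxx (hx x hxx)
  exact (coextensive_succ_iff_mem_self hy).mpr mem_self
end

section
/- For any type V with a binary relation ∈ on V, if x is an upper and y is a predecessor of x, then y is an upper. -/
/-- An *upper* for the membership relation `mem`, where `mem z x` is read `z ∈ x`: an element
containing every member of Russell's class `{z | z ∉ z}`, and possibly other elements. -/
def IsUpper {V : Type*} (mem : V → V → Prop) (x : V) : Prop :=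
  ∀ z, ¬ mem z z → mem z x

namespace IsUpper

variable {V : Type*} {mem : V → V → Prop} {x z : V}

theorem mem_self (hx : IsUpper mem x) : mem x x := by
  by_contra hxx
  exact hxx (hx x hxx)

theorem ne_of_not_mem_self (hx : IsUpper mem x) (hz : ¬ mem z z) : z ≠ x := by
  rintro rfl
  exact hz hx.mem_self

end IsUpper

theorem upper_pred_upper_general {V : Type*} {mem : V → V → Prop} {x y : V}
    (hx : IsUpper mem x) (hy : ∀ z, mem z x → z ≠ x → mem z y) : IsUpper mem y :=
  fun z hz ↦ hy z (hx z hz) (hx.ne_of_not_mem_self hz)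

theorem upper_pred_upper {V : Type*} (mem : V → V → Prop) (x y : V)
    (hx : ∀ z, ¬ mem z z → mem z x)
    (hy : ∀ z, mem z y ↔ (mem z x ∧ z ≠ x)) :
    ∀ z, ¬ mem z z → mem z y :=
  upper_pred_upper_general hx fun z hzx hne ↦ (hy z).2 ⟨hzx, hne⟩
end

section
/- For any type V with a binary relation ∈ on V, if x is a lower and y is a successor of x, then x and y constitute a lower ascending link: x ∈ y, x ≠ y, and both x and y are lowers. -/
/-- The lowers of a membership relation: `x` is a lower if no member of `x` is a member of itself.
Here `mem z x` stands for `z ∈ x`. -/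
def IsLower {V : Type*} (mem : V → V → Prop) (x : V) : Prop :=
  ∀ z, mem z x → ¬ mem z z

/-- `IsSuccessor mem x y` says that `y` is a successor `x ∪ {x}` of `x`. It is a relation rather
than a function, since without extensionality or comprehension a successor need be neither unique
nor existent. -/
def IsSuccessor {V : Type*} (mem : V → V → Prop) (x y : V) : Prop :=
  ∀ z, mem z y ↔ (mem z x ∨ z = x)

section

variable {V : Type*} {mem : V → V → Prop} {x y : V}

theorem IsLower.not_mem_self (hx : IsLower mem x) : ¬ mem x x :=
  fun hxx => hx x hxx hxx

theorem IsSuccessor.self_mem (hy : IsSuccessor mem x y) : mem x y :=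
  (hy x).2 (Or.inr rfl)

theorem IsSuccessor.ne (hy : IsSuccessor mem x y) (hxx : ¬ mem x x) : x ≠ y := by
  rintro rfl
  exact hxx hy.self_mem

theorem IsSuccessor.isLower (hy : IsSuccessor mem x y) (hx : IsLower mem x) : IsLower mem y := by
  intro z hzy
  rcases (hy z).1 hzy with hzx | rfl
  · exact hx z hzx
  · exact hx.not_mem_self

end

theorem lower_ascending_link {V : Type*} (mem : V → V → Prop) (x y : V)
    (hx : ∀ z, mem z x → ¬ mem z z)
    (hy : ∀ z, mem z y ↔ (mem z x ∨ z = x)) :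
    mem x y ∧ x ≠ y ∧ (∀ z, mem z x → ¬ mem z z) ∧ (∀ z, mem z y → ¬ mem z z) := by
  have x_lower : IsLower mem x := hx
  have y_successor : IsSuccessor mem x y := hy
  exact ⟨y_successor.self_mem, y_successor.ne x_lower.not_mem_self, x_lower,
    y_successor.isLower x_lower⟩
end
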